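/- arXiv:1005.2730 — 3 statements merged into one kernel-verified Lean document; each statement's English description precedes it below -/
import Mathlib

section
/- For every real t with 0 ≤ t ≤ π/2, ∫_0^t (x / sin x) dx = ∑_{n=0}^∞ 4ⁿ sin^{2n+1} t / ((2n+1)² C(2n,n)). -/
open Real

/-!
Write `b n = 4ⁿ / C(2n,n)`, so that `(2n+1) b (n+1) = (2n+2) b n`. Then the derivative of
`(b n / (2n+1)) cos x sin^{2n+1} x` is `b n sin^{2n} x - b (n+1) sin^{2n+2} x`, which telescopes:

`x - cos x ∑_{n<N} b n / (2n+1) sin^{2n+1} x = b N ∫_0^x sin^{2N} u du`   (`remainder_eq`).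

The right side is nonnegative on `[0, π/2]` and, as `b N = O(N)`, tends to `0` for `x < π/2`.
Dividing by `sin x`, the functions `cos x ∑_{n<N} b n / (2n+1) sin^{2n} x` converge to `x / sin x`
on `(0, π/2)` and lie between `0` and `x / sin x ≤ π/2`, so dominated convergence applies (including
at `t = π/2`). They integrate over `[0, t]` to the partial sums of the asserted series, whose terms
are nonnegative.
-/

namespace CentralBinomSeries

/-- The coefficient `4ⁿ / C(2n,n)`. -/
noncomputable def b (n : ℕ) : ℝ := 4 ^ n / (n.centralBinom : ℝ)

lemma b_nonneg (n : ℕ) : 0 ≤ b n := by unfold b; positivity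

lemma b_succ (n : ℕ) : b (n + 1) = (2 * n + 2) * (b n / (2 * n + 1)) := by
  have h : ((n : ℝ) + 1) * ((n + 1).centralBinom : ℝ) = 2 * (2 * n + 1) * (n.centralBinom : ℝ) := by
    exact_mod_cast Nat.succ_mul_centralBinom_succ n
  have h1 : (n.centralBinom : ℝ) ≠ 0 := by exact_mod_cast n.centralBinom_ne_zero
  have h2 : ((n + 1).centralBinom : ℝ) ≠ 0 := by exact_mod_cast (n + 1).centralBinom_ne_zero
  have h3 : (2 * (n : ℝ) + 1) ≠ 0 := by positivity
  unfold b
  field_simp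
  rw [pow_succ]
  linear_combination (-2 : ℝ) * 4 ^ n * h

lemma b_le (n : ℕ) : b n ≤ 2 * n + 1 := by
  induction n with
  | zero => simp [b]
  | succ n ih =>
    have : b n / (2 * n + 1) ≤ 1 := by
      rw [div_le_one (by positivity)]; exact ih
    rw [b_succ]
    push_cast
    nlinarith [(Nat.cast_nonneg n : (0 : ℝ) ≤ n)]

lemma hasDerivAt_partial (N : ℕ) (x : ℝ) :
    HasDerivAt (fun x => cos x * ∑ n ∈ Finset.range N, b n / (2 * n + 1) * sin x ^ (2 * n + 1))
      (1 - b N * sin x ^ (2 * N)) x := by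
  induction N with
  | zero => simpa [b] using hasDerivAt_const x (0 : ℝ)
  | succ N ih =>
    have h := ih.add ((hasDerivAt_cos x).mul
      (((hasDerivAt_sin x).pow (2 * N + 1)).const_mul (b N / (2 * N + 1))))
    have h3 : (2 * (N : ℝ) + 1) ≠ 0 := by positivity
    refine (h.congr_of_eventuallyEq (Filter.Eventually.of_forall fun y => ?_)).congr_deriv ?_
    · simp only [Finset.sum_range_succ, mul_add, Pi.add_apply, Pi.mul_apply, Pi.pow_apply]
    · have e : b N = (2 * N + 1) * (b N / (2 * N + 1)) := by field_simp
      have hc := sin_sq_add_cos_sq x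
      rw [b_succ]
      simp only [Nat.add_sub_cancel, Pi.pow_apply]
      push_cast
      rw [show 2 * (N + 1) = 2 * N + 2 by ring]
      simp only [pow_succ _ (2 * N), pow_add _ (2 * N) 2]
      generalize b N / (2 * N + 1) = a at *
      rw [e]
      linear_combination a * (2 * N + 1) * sin x ^ (2 * N) * hc

/-- The exact remainder of the expansion of `x` in the functions `cos x sin^{2n+1} x`. -/
lemma remainder_eq (N : ℕ) (x : ℝ) :
    x - cos x * ∑ n ∈ Finset.range N, b n / (2 * n + 1) * sin x ^ (2 * n + 1) =
      ∫ u in (0 : ℝ)..x, b N * sin u ^ (2 * N) := by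
  have h := intervalIntegral.integral_eq_sub_of_hasDerivAt (a := 0) (b := x)
    (fun u _ => (hasDerivAt_id u).sub (hasDerivAt_partial N u))
    (Continuous.intervalIntegrable (by fun_prop) _ _)
  simp only [sub_sub_cancel] at h
  rw [h]
  simp

lemma remainder_nonneg (N : ℕ) {x : ℝ} (h0 : 0 ≤ x) :
    0 ≤ ∫ u in (0 : ℝ)..x, b N * sin u ^ (2 * N) := by
  refine intervalIntegral.integral_nonneg h0 fun u _ => ?_
  rw [pow_mul]
  exact mul_nonneg (b_nonneg N) (pow_nonneg (sq_nonneg _) _)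

lemma remainder_le (N : ℕ) {x : ℝ} (h0 : 0 ≤ x) (h1 : x ≤ π / 2) :
    ∫ u in (0 : ℝ)..x, b N * sin u ^ (2 * N) ≤ x * ((2 * N + 1) * (sin x ^ 2) ^ N) := by
  have h : ∫ u in (0 : ℝ)..x, b N * sin u ^ (2 * N) ≤
      ∫ u in (0 : ℝ)..x, (2 * N + 1) * (sin x ^ 2) ^ N := by
    refine intervalIntegral.integral_mono_on h0
      (Continuous.intervalIntegrable (by fun_prop) _ _)
      (Continuous.intervalIntegrable (by fun_prop) _ _) fun u hu => ?_
    have hs0 : 0 ≤ sin u := sin_nonneg_of_nonneg_of_le_pi hu.1 (by linarith [hu.2, pi_pos])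
    have hs : sin u ≤ sin x := sin_le_sin_of_le_of_le_pi_div_two (by linarith [hu.1, pi_pos]) h1 hu.2
    rw [pow_mul]
    have := b_le N
    gcongr
  rwa [intervalIntegral.integral_const, sub_zero, smul_eq_mul] at h

lemma tendsto_remainder {x : ℝ} (h0 : 0 ≤ x) (h1 : x < π / 2) :
    Filter.Tendsto (fun N : ℕ => ∫ u in (0 : ℝ)..x, b N * sin u ^ (2 * N)) Filter.atTop
      (nhds 0) := by
  have hc : 0 < cos x := cos_pos_of_mem_Ioo ⟨by linarith [pi_pos], h1⟩
  have hr : sin x ^ 2 < 1 := by nlinarith [sin_sq_add_cos_sq x]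
  have l1 := tendsto_self_mul_const_pow_of_lt_one (sq_nonneg (sin x)) hr
  have l2 := tendsto_pow_atTop_nhds_zero_of_lt_one (sq_nonneg (sin x)) hr
  have l3 := ((l1.const_mul 2).add l2).const_mul x
  simp only [mul_zero, add_zero] at l3
  refine squeeze_zero (fun N => remainder_nonneg N h0) (fun N => remainder_le N h0 h1.le)
    (l3.congr fun N => by ring)

lemma partial_div_sin (N : ℕ) {x : ℝ} (hs : sin x ≠ 0) :
    ∑ n ∈ Finset.range N, b n / (2 * n + 1) * (sin x ^ (2 * n) * cos x) =
      x / sin x - (∫ u in (0 : ℝ)..x, b N * sin u ^ (2 * N)) / sin x := by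
  rw [← remainder_eq, ← sub_div, sub_sub_cancel, eq_div_iff hs, Finset.mul_sum, Finset.sum_mul]
  refine Finset.sum_congr rfl fun n _ => ?_
  ring

lemma integral_partial (N : ℕ) (t : ℝ) :
    ∫ x in (0 : ℝ)..t, ∑ n ∈ Finset.range N, b n / (2 * n + 1) * (sin x ^ (2 * n) * cos x) =
      ∑ n ∈ Finset.range N, b n / (2 * n + 1) * (sin t ^ (2 * n + 1) / (2 * n + 1)) := by
  rw [intervalIntegral.integral_finsetSum
    (fun n _ => Continuous.intervalIntegrable (by fun_prop) _ _)]
  refine Finset.sum_congr rfl fun n _ => ?_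
  have h := intervalIntegral.integral_eq_sub_of_hasDerivAt (a := 0) (b := t)
    (f := fun x => sin x ^ (2 * n + 1) / (2 * n + 1)) (f' := fun x => sin x ^ (2 * n) * cos x)
    (fun u _ => by
      have := ((hasDerivAt_sin u).pow (2 * n + 1)).div_const (2 * (n : ℝ) + 1)
      refine this.congr_deriv ?_
      have : (2 * (n : ℝ) + 1) ≠ 0 := by positivity
      push_cast
      field_simp)
    (Continuous.intervalIntegrable (by fun_prop) _ _)
  rw [intervalIntegral.integral_const_mul, h]
  simp

end CentralBinomSeries

open CentralBinomSeries in
/-- For `0 ≤ t ≤ π/2`,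
`∫_0^t x/sin x dx = ∑_{n=0}^∞ 4ⁿ sin^{2n+1} t / ((2n+1)² C(2n,n))`. -/
theorem stmt_15 (t : ℝ) (h0 : 0 ≤ t) (h1 : t ≤ π / 2) :
    ∫ x in (0 : ℝ)..t, x / Real.sin x =
      ∑' n : ℕ, (4 : ℝ) ^ n * Real.sin t ^ (2 * n + 1) /
        ((2 * (n : ℝ) + 1) ^ 2 * ((2 * n).choose n : ℝ)) := by
  have hpos : ∀ x ∈ Set.uIoc 0 t, 0 < x ∧ x ≤ π / 2 ∧ 0 < sin x := by
    intro x hx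
    rw [Set.uIoc_of_le h0] at hx
    exact ⟨hx.1, hx.2.trans h1, sin_pos_of_pos_of_lt_pi hx.1 (by linarith [hx.2, pi_pos])⟩
  have key := intervalIntegral.tendsto_integral_filter_of_dominated_convergence
    (μ := MeasureTheory.volume) (a := 0) (b := t) (l := Filter.atTop)
    (F := fun (N : ℕ) (x : ℝ) =>
      ∑ n ∈ Finset.range N, b n / (2 * n + 1) * (sin x ^ (2 * n) * cos x))
    (f := fun x => x / sin x) (fun _ => π / 2)
    (Filter.Eventually.of_forall fun N => Continuous.aestronglyMeasurable (by fun_prop))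
    (Filter.Eventually.of_forall fun N => MeasureTheory.ae_of_all _ fun x hx => by
      obtain ⟨hx0, hx1, hs⟩ := hpos x hx
      have hc : 0 ≤ cos x := cos_nonneg_of_mem_Icc ⟨by linarith, hx1⟩
      have hn : 0 ≤ ∑ n ∈ Finset.range N, b n / (2 * n + 1) * (sin x ^ (2 * n) * cos x) :=
        Finset.sum_nonneg fun n _ => by
          have := b_nonneg n
          positivity
      rw [norm_of_nonneg hn, partial_div_sin N hs.ne']
      have hR := div_nonneg (remainder_nonneg N hx0.le) hs.le
      have hJ : x / sin x ≤ π / 2 := by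
        have := mul_le_sin hx0.le hx1
        rw [div_le_iff₀ hs]
        calc x = π / 2 * (2 / π * x) := by field_simp
          _ ≤ π / 2 * sin x := by gcongr
      linarith)
    (by simp)
    -- At `x = π/2` all partial sums vanish because of the factor `cos x`, so convergence fails
    -- at this single point.
    (by
      filter_upwards [MeasureTheory.Measure.ae_ne MeasureTheory.volume (π / 2)] with x hne hx
      obtain ⟨hx0, hx1, hs⟩ := hpos x hx
      have h := ((tendsto_remainder hx0.le (lt_of_le_of_ne hx1 hne)).div_const
        (sin x)).const_sub (x / sin x)
      simp only [zero_div, sub_zero] at h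
      exact h.congr fun N => (partial_div_sin N hs.ne').symm)
  simp only [integral_partial] at key
  have hst : 0 ≤ sin t := sin_nonneg_of_nonneg_of_le_pi h0 (by linarith [pi_pos])
  have hsum := (hasSum_iff_tendsto_nat_of_nonneg (fun n => by
    have := b_nonneg n
    positivity) _).2 key
  rw [← hsum.tsum_eq]
  refine tsum_congr fun n => ?_
  rw [b, Nat.centralBinom_eq_two_mul_choose, div_div, div_mul_div_comm]
  congr 1
  ring
end

section
/- Catalan's constant satisfies G = (1/2) ∑_{n=0}^∞ 4ⁿ / ((2n+1)² C(2n,n)). -/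
/-!
Both series are expanded from the integral `∫₀¹ arctan t / t dt`.

Integrating the Taylor series of `arctan t / t` termwise gives Catalan's constant
(`hasSum_catalan`).

For the binomial series put `Wₙ = ∫₀¹ (1 - c²)ⁿ dc = 4ⁿ / ((2n+1) C(2n,n))` (`wallis_eq`), so that
its general term is `Wₙ / (2n+1) = Wₙ ∫₀¹ u²ⁿ du`. The substitution `u = 2t / (1 + t²)`
turns this into an integral over `t ∈ [0, 1]` with nonnegative integrand (`integral_subst`). The
generating function is `∑ Wₙ u²ⁿ = ∫₀¹ dc / (1 - u² (1 - c²))` (`hasSum_wallis_mul_pow`), and at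
`u = 2t / (1 + t²)` the duplication formula `2 arctan t = arctan (2t / (1 - t²))` evaluates it as
`(1 + t²)² / (1 - t²) · arctan t / t` (`integral_kernel`). Multiplying by
`du/dt = 2 (1 - t²) / (1 + t²)²` leaves `2 arctan t / t`, so the binomial series sums to
`2 ∫₀¹ arctan t / t dt` (`hasSum_binomial_series`).
-/

open Real

open MeasureTheory intervalIntegral

lemma wallis_rec (n : ℕ) :
    (2 * (n : ℝ) + 3) * ∫ c in (0 : ℝ)..1, (1 - c ^ 2) ^ (n + 1) =
      (2 * (n : ℝ) + 2) * ∫ c in (0 : ℝ)..1, (1 - c ^ 2) ^ n := by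
  -- The primitive `c (1 - c²)ⁿ⁺¹` vanishes at both endpoints.
  have hd : ∀ c ∈ Set.uIcc (0 : ℝ) 1, HasDerivAt (fun c : ℝ => c * (1 - c ^ 2) ^ (n + 1))
      ((2 * (n : ℝ) + 3) * (1 - c ^ 2) ^ (n + 1) - (2 * (n : ℝ) + 2) * (1 - c ^ 2) ^ n) c := by
    intro c _
    have h := (hasDerivAt_id c).mul ((((hasDerivAt_id c).pow 2).const_sub 1).pow (n + 1))
    refine h.congr_deriv ?_
    simp only [id, Pi.pow_apply, Nat.add_sub_cancel]
    push_cast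
    ring
  have h := integral_eq_sub_of_hasDerivAt hd (Continuous.intervalIntegrable (by fun_prop) _ _)
  rw [intervalIntegral.integral_sub (Continuous.intervalIntegrable (by fun_prop) _ _)
    (Continuous.intervalIntegrable (by fun_prop) _ _)] at h
  simp only [intervalIntegral.integral_const_mul] at h
  norm_num at h
  linarith

lemma wallis_eq (n : ℕ) :
    ∫ c in (0 : ℝ)..1, (1 - c ^ 2) ^ n =
      (4 : ℝ) ^ n / ((2 * (n : ℝ) + 1) * (n.centralBinom : ℝ)) := by
  induction n with
  | zero => simp
  | succ n ih =>
    have h := wallis_rec n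
    rw [ih] at h
    have hc : ((n : ℝ) + 1) * ((n + 1).centralBinom : ℝ) =
        2 * (2 * n + 1) * (n.centralBinom : ℝ) := by
      exact_mod_cast Nat.succ_mul_centralBinom_succ n
    have h0 : (0 : ℝ) < n.centralBinom := by exact_mod_cast n.centralBinom_pos
    have h1 : (0 : ℝ) < (n + 1).centralBinom := by exact_mod_cast (n + 1).centralBinom_pos
    have e : (n.centralBinom : ℝ) =
        ((n : ℝ) + 1) * ((n + 1).centralBinom : ℝ) / (2 * (2 * n + 1)) := by
      field_simp; linarith
    rw [e] at h
    push_cast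
    field_simp at h ⊢
    rw [pow_succ]
    linarith

lemma hasSum_wallis_mul_pow {u : ℝ} (hu0 : 0 ≤ u) (hu1 : u < 1) :
    HasSum (fun n : ℕ => (∫ c in (0 : ℝ)..1, (1 - c ^ 2) ^ n) * u ^ (2 * n))
      (∫ c in (0 : ℝ)..1, (1 - u ^ 2 * (1 - c ^ 2))⁻¹) := by
  have hu2 : u ^ 2 < 1 := by nlinarith
  have key := intervalIntegral.hasSum_integral_of_dominated_convergence (μ := volume)
    (a := (0 : ℝ)) (b := 1)
    (F := fun (n : ℕ) (c : ℝ) => (1 - c ^ 2) ^ n * u ^ (2 * n))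
    (f := fun c => (1 - u ^ 2 * (1 - c ^ 2))⁻¹)
    (fun n _ => (u ^ 2) ^ n)
    (fun n => (Continuous.aestronglyMeasurable (by fun_prop)))
    (fun n => Filter.Eventually.of_forall fun c hc => ?_)
    (Filter.Eventually.of_forall fun c hc => summable_geometric_of_lt_one (by positivity) hu2)
    (by simp)
    (Filter.Eventually.of_forall fun c hc => ?_)
  · simpa only [intervalIntegral.integral_mul_const] using key
  · rw [Set.uIoc_of_le zero_le_one] at hc
    have h0 : 0 ≤ 1 - c ^ 2 := by nlinarith [hc.1, hc.2]
    have h1 : 1 - c ^ 2 ≤ 1 := by nlinarith [hc.1, hc.2]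
    rw [Real.norm_of_nonneg (by positivity), pow_mul]
    exact mul_le_of_le_one_left (by positivity) (pow_le_one₀ h0 h1)
  · rw [Set.uIoc_of_le zero_le_one] at hc
    have h0 : 0 ≤ 1 - c ^ 2 := by nlinarith [hc.1, hc.2]
    have h1 : 1 - c ^ 2 ≤ 1 := by nlinarith [hc.1, hc.2]
    have := hasSum_geometric_of_lt_one (r := u ^ 2 * (1 - c ^ 2)) (by positivity)
      (by nlinarith [sq_nonneg u])
    refine this.congr_fun fun n => ?_
    rw [mul_pow, pow_mul, mul_comm]

/-- The generating function of the Wallis integrals at `u = 2t / (1 + t²)`. Here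
`1 - u² = ((1 - t²) / (1 + t²))²`, so a primitive is a multiple of
`arctan (2t c / (1 - t²))`. -/
lemma integral_kernel {t : ℝ} (ht0 : 0 < t) (ht1 : t < 1) :
    ∫ c in (0 : ℝ)..1, (1 - (2 * t / (1 + t ^ 2)) ^ 2 * (1 - c ^ 2))⁻¹ =
      (1 + t ^ 2) ^ 2 / (1 - t ^ 2) * (arctan t / t) := by
  have hp : 0 < 1 - t ^ 2 := by nlinarith
  have hk : ∀ c : ℝ, 1 - (2 * t / (1 + t ^ 2)) ^ 2 * (1 - c ^ 2) =
      ((1 - t ^ 2) ^ 2 + (2 * t * c) ^ 2) / (1 + t ^ 2) ^ 2 := by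
    intro c; field_simp; ring
  have hd : ∀ c ∈ Set.uIcc (0 : ℝ) 1,
      HasDerivAt (fun c : ℝ => (1 + t ^ 2) ^ 2 / (2 * t * (1 - t ^ 2)) *
        arctan (2 * t / (1 - t ^ 2) * c))
      ((1 - (2 * t / (1 + t ^ 2)) ^ 2 * (1 - c ^ 2))⁻¹) c := by
    intro c _
    have h := (((hasDerivAt_id c).const_mul (2 * t / (1 - t ^ 2))).arctan).const_mul
      ((1 + t ^ 2) ^ 2 / (2 * t * (1 - t ^ 2)))
    refine h.congr_deriv ?_
    rw [hk]
    simp only [id]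
    have : (1 - t ^ 2) ^ 2 + (2 * t * c) ^ 2 ≠ 0 := by positivity
    have h2 : 1 + (2 * t / (1 - t ^ 2) * c) ^ 2 =
        ((1 - t ^ 2) ^ 2 + (2 * t * c) ^ 2) / (1 - t ^ 2) ^ 2 := by
      field_simp
    rw [h2]
    field_simp
  rw [integral_eq_sub_of_hasDerivAt hd]
  · rw [mul_one, mul_zero, arctan_zero, mul_zero, sub_zero,
      ← two_mul_arctan (by linarith) ht1]
    field_simp
  · refine Continuous.intervalIntegrable (Continuous.inv₀ (by fun_prop) fun c => ?_) _ _
    rw [hk]; positivity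

/-- The integral `∫₀¹ u²ⁿ du` after the substitution `u = 2t / (1 + t²)`. -/
lemma integral_subst (n : ℕ) :
    ∫ t in (0 : ℝ)..1, (2 * t / (1 + t ^ 2)) ^ (2 * n) * (2 * (1 - t ^ 2) / (1 + t ^ 2) ^ 2) =
      1 / (2 * (n : ℝ) + 1) := by
  have hd : ∀ t ∈ Set.uIcc (0 : ℝ) 1,
      HasDerivAt (fun t : ℝ => (2 * t / (1 + t ^ 2)) ^ (2 * n + 1) / (2 * (n : ℝ) + 1))
      ((2 * t / (1 + t ^ 2)) ^ (2 * n) * (2 * (1 - t ^ 2) / (1 + t ^ 2) ^ 2)) t := by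
    intro t _
    have h0 : HasDerivAt (fun t : ℝ => 2 * t / (1 + t ^ 2))
        (2 * (1 - t ^ 2) / (1 + t ^ 2) ^ 2) t := by
      have h := ((hasDerivAt_id t).const_mul 2).div (((hasDerivAt_id t).pow 2).const_add 1)
        (by simp only [Pi.pow_apply, id]; positivity)
      refine h.congr_deriv ?_
      simp only [id, Pi.pow_apply]
      congr 1
      push_cast
      ring
    refine ((h0.pow (2 * n + 1)).div_const _).congr_deriv ?_
    simp only [Nat.add_sub_cancel]
    push_cast
    field_simp
  rw [integral_eq_sub_of_hasDerivAt hd]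
  · norm_num
  · refine Continuous.intervalIntegrable ?_ _ _
    have h1 : ∀ t : ℝ, 1 + t ^ 2 ≠ 0 := fun t => by positivity
    have h2 : ∀ t : ℝ, (1 + t ^ 2) ^ 2 ≠ 0 := fun t => by positivity
    fun_prop (disch := assumption)

lemma intervalIntegrable_arctan_div :
    IntervalIntegrable (fun t : ℝ => arctan t / t) volume 0 1 := by
  refine IntervalIntegrable.mono_fun (g := fun t : ℝ => arctan t / t) (f := fun _ => (1 : ℝ))
    (by simp) ?_ ?_
  · exact (measurable_arctan.div measurable_id).aestronglyMeasurable
  · filter_upwards [ae_restrict_mem measurableSet_uIoc] with t ht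
    rw [Set.uIoc_of_le zero_le_one] at ht
    have h1 : arctan t ≤ t := by
      have h := Real.le_tan (arctan_nonneg.2 ht.1.le) (arctan_lt_pi_div_two t)
      rwa [tan_arctan] at h
    rw [Real.norm_of_nonneg (div_nonneg (arctan_nonneg.2 ht.1.le) ht.1.le), norm_one]
    exact div_le_one_of_le₀ h1 ht.1.le

lemma hasSum_binomial_series :
    HasSum (fun n : ℕ => (4 : ℝ) ^ n / ((2 * (n : ℝ) + 1) ^ 2 * ((2 * n).choose n : ℝ)))
      (∫ t in (0 : ℝ)..1, 2 * (arctan t / t)) := by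
  let F : ℕ → ℝ → ℝ := fun n t => (∫ c in (0 : ℝ)..1, (1 - c ^ 2) ^ n) *
    ((2 * t / (1 + t ^ 2)) ^ (2 * n) * (2 * (1 - t ^ 2) / (1 + t ^ 2) ^ 2))
  have hF : ∀ t : ℝ, 0 < t → t < 1 → HasSum (fun n => F n t) (2 * (arctan t / t)) := by
    intro t ht0 ht1
    have hp : 0 < 1 - t ^ 2 := by nlinarith
    have hu1 : 2 * t / (1 + t ^ 2) < 1 := by
      rw [div_lt_one (by positivity)]; nlinarith [sq_pos_of_pos (sub_pos.2 ht1)]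
    have h := (hasSum_wallis_mul_pow (by positivity) hu1).mul_right
      (2 * (1 - t ^ 2) / (1 + t ^ 2) ^ 2)
    rw [integral_kernel ht0 ht1] at h
    have e1 : (fun n => F n t) = fun n : ℕ => (∫ c in (0 : ℝ)..1, (1 - c ^ 2) ^ n) *
        (2 * t / (1 + t ^ 2)) ^ (2 * n) * (2 * (1 - t ^ 2) / (1 + t ^ 2) ^ 2) := by
      funext n; simp only [F]; ring
    have e2 : 2 * (arctan t / t) = (1 + t ^ 2) ^ 2 / (1 - t ^ 2) * (arctan t / t) *
        (2 * (1 - t ^ 2) / (1 + t ^ 2) ^ 2) := by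
      field_simp
    rw [e1, e2]
    exact h
  have hne : ∀ᵐ t : ℝ, t ≠ 1 := by simp [ae_iff, measure_singleton]
  have hF' : ∀ᵐ t : ℝ, t ∈ Set.uIoc (0 : ℝ) 1 → HasSum (fun n => F n t) (2 * (arctan t / t)) := by
    filter_upwards [hne] with t h1 ht
    rw [Set.uIoc_of_le zero_le_one] at ht
    exact hF t ht.1 (lt_of_le_of_ne ht.2 h1)
  -- The terms are nonnegative, so they serve as their own dominating series: integrability of the
  -- sum `2 arctan t / t` is all that is needed, with no prior bound on the binomial series.
  have key := intervalIntegral.hasSum_integral_of_dominated_convergence (μ := volume)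
    (a := (0 : ℝ)) (b := 1) (F := F) (f := fun t => 2 * (arctan t / t))
    F
    (fun n => Measurable.aestronglyMeasurable (by fun_prop))
    (fun n => Filter.Eventually.of_forall fun t ht => ?_)
    (hF'.mono fun t h ht => (h ht).summable)
    ?_ hF'
  · refine key.congr_fun fun n => ?_
    simp only [F]
    rw [intervalIntegral.integral_const_mul, integral_subst, wallis_eq, Nat.centralBinom]
    field_simp
  · rw [Set.uIoc_of_le zero_le_one] at ht
    have h0 : 0 ≤ 1 - t ^ 2 := by nlinarith [ht.1, ht.2]
    have ht0 := ht.1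
    have : 0 ≤ ∫ c in (0 : ℝ)..1, (1 - c ^ 2) ^ n := by rw [wallis_eq]; positivity
    exact (Real.norm_of_nonneg (by positivity)).le
  · refine (intervalIntegrable_arctan_div.const_mul 2).congr_ae ?_
    rw [Filter.EventuallyEq, ae_restrict_iff' measurableSet_uIoc]
    filter_upwards [hF'] with t h ht using (h ht).tsum_eq.symm

lemma hasSum_catalan :
    HasSum (fun n : ℕ => (-1 : ℝ) ^ n / (2 * (n : ℝ) + 1) ^ 2)
      (∫ t in (0 : ℝ)..1, arctan t / t) := by
  let F : ℕ → ℝ → ℝ := fun n t => (-1 : ℝ) ^ n * t ^ (2 * n) / (2 * (n : ℝ) + 1)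
  have hpow : ∀ n : ℕ, ∫ t in (0 : ℝ)..1, t ^ (2 * n) = 1 / (2 * (n : ℝ) + 1) := by
    intro n
    rw [integral_pow]
    simp
  have hs : Summable fun n : ℕ => 1 / (2 * (n : ℝ) + 1) ^ 2 := by
    have h := (Real.summable_one_div_nat_pow (p := 2)).2 (by norm_num)
    have h2 := h.comp_injective (i := fun n : ℕ => 2 * n + 1) (fun a b h => by
      simp only at h; omega)
    refine h2.congr fun n => ?_
    simp
  have key := hasSum_integral_of_summable_integral_norm
    (μ := volume.restrict (Set.Ioc (0 : ℝ) 1)) (F := F) (fun n => ?_) ?_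
  · rw [intervalIntegral.integral_of_le zero_le_one]
    have e : ∫ t in Set.Ioc (0 : ℝ) 1, arctan t / t =
        ∫ t in Set.Ioc (0 : ℝ) 1, ∑' n, F n t := ?_
    · rw [e]
      refine key.congr_fun fun n => ?_
      rw [← intervalIntegral.integral_of_le zero_le_one]
      simp only [F]
      rw [intervalIntegral.integral_div, intervalIntegral.integral_const_mul, hpow]
      field_simp
    · have hne : ∀ᵐ t : ℝ, t ≠ 1 := by simp [ae_iff, measure_singleton]
      refine setIntegral_congr_ae measurableSet_Ioc ?_
      filter_upwards [hne] with t h1 ht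
      have ht1 : ‖t‖ < 1 := by
        rw [Real.norm_of_nonneg ht.1.le]; exact lt_of_le_of_ne ht.2 h1
      have h := ((Real.hasSum_arctan ht1).div_const t).tsum_eq
      rw [← h]
      refine tsum_congr fun n => ?_
      have := ht.1.ne'
      simp only [F]
      push_cast
      rw [pow_succ]
      field_simp
  · have : IntervalIntegrable (F n) volume 0 1 :=
      Continuous.intervalIntegrable (by fun_prop) _ _
    exact (intervalIntegrable_iff_integrableOn_Ioc_of_le zero_le_one).1 this
  · refine hs.congr fun n => ?_
    rw [← intervalIntegral.integral_of_le zero_le_one]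
    have : ∀ t : ℝ, ‖F n t‖ = t ^ (2 * n) / (2 * (n : ℝ) + 1) := by
      intro t
      have h2 : 0 ≤ t ^ (2 * n) := by rw [pow_mul]; positivity
      simp only [F, norm_div, norm_mul, norm_pow, norm_neg, norm_one, one_pow, one_mul]
      rw [← norm_pow, Real.norm_of_nonneg h2, Real.norm_of_nonneg (by positivity)]
    simp only [this]
    rw [intervalIntegral.integral_div, hpow]
    field_simp

/-- Catalan's constant satisfies
`G = (1/2) ∑_{n=0}^∞ 4ⁿ/((2n+1)² C(2n,n))`. -/
theorem stmt_16 :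
    ∑' n : ℕ, (-1 : ℝ) ^ n / (2 * (n : ℝ) + 1) ^ 2 =
      (1 / 2) * ∑' n : ℕ, (4 : ℝ) ^ n /
        ((2 * (n : ℝ) + 1) ^ 2 * ((2 * n).choose n : ℝ)) := by
  rw [hasSum_catalan.tsum_eq, hasSum_binomial_series.tsum_eq,
    intervalIntegral.integral_const_mul]
  ring
end

section
/- The derivative of the Hurwitz zeta function with respect to s at s = −1 and parameter a = 1/4 satisfies ζ'(−1, 1/4) = G/(4π) − (1/8) ζ'(−1), where ζ'(−1) is the derivative of the Riemann zeta function at −1. -/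
open Real Complex HurwitzZeta

/-!
The Hurwitz zeta function splits into its parts even and odd in `a`, and each part is handled by
its functional equation `s ↦ 1 - s`, so that only Dirichlet series in the half-plane of absolute
convergence (near `s = 2`) are needed.

* Even part: `∑ cos (π n / 2) / n ^ s = (2 * 4 ^ (-s) - 2 ^ (-s)) ζ(s)` (`cosZeta_quarter`), and the
  functional equations of both sides carry the same gamma factor. Hence, for `re s < 0`, the even
  part is `(2 u ^ 2 - u) ζ(s)` with `u = 2 ^ (s - 1)`. At `s = -1` one has `u = 1 / 4`, which is the
  critical point of `2 u ^ 2 - u`, so the derivative is `-ζ'(-1) / 8`.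
* Odd part: `∑ sin (π n / 2) / n ^ 2 = G` (`sinZeta_quarter_two`). The functional equation has
  a factor `sin (π (1 - s) / 2)` vanishing at `s = -1`, so the derivative only sees the
  derivative of this factor, and equals `G / (4 π)`.
-/

/-- The subseries of `∑ 1 / n ^ s` over the multiples of `m` sums to `m ^ (-s) ζ(s)`. -/
lemma hasSum_dvd_one_div_cpow {m : ℕ} (hm : 0 < m) {s : ℂ} (hs : 1 < s.re) :
    HasSum (fun n : ℕ => if m ∣ n then 1 / (n : ℂ) ^ s else 0)
      ((m : ℂ) ^ (-s) * riemannZeta s) := by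
  have hinj : Function.Injective (fun k : ℕ => m * k) :=
    fun a b h => Nat.eq_of_mul_eq_mul_left hm h
  rw [← hinj.hasSum_iff]
  · have h : HasSum (fun n : ℕ => 1 / (n : ℂ) ^ s) (riemannZeta s) := by
      rw [zeta_eq_tsum_one_div_nat_cpow hs]
      exact (Complex.summable_one_div_nat_cpow.mpr hs).hasSum
    refine (h.mul_left ((m : ℂ) ^ (-s))).congr_fun fun k => ?_
    simp only [Function.comp_apply, dvd_mul_right, if_true]
    rw [Nat.cast_mul, natCast_mul_natCast_cpow, cpow_neg, one_div, one_div, mul_inv]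
  · intro n hn
    rw [if_neg]
    rintro ⟨k, rfl⟩
    exact hn ⟨k, rfl⟩

lemma cos_quarter_mul_nat (n : ℕ) :
    Real.cos (2 * π * (1 / 4) * n) =
      2 * (if 4 ∣ n then 1 else 0) - (if 2 ∣ n then 1 else 0) := by
  obtain ⟨k, hk⟩ : ∃ k, n = 4 * k + n % 4 := ⟨n / 4, by omega⟩
  have hper (x : ℝ) : Real.cos (k * (2 * π) + x) = Real.cos x := by
    rw [add_comm, Real.cos_add_nat_mul_two_pi]
  have hlt : n % 4 < 4 := Nat.mod_lt _ (by norm_num)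
  generalize n % 4 = r at hk hlt
  subst hk
  have harg : 2 * π * (1 / 4) * ((4 * k + r : ℕ) : ℝ) = k * (2 * π) + r * (π / 2) := by
    push_cast; ring
  rw [harg, hper]
  interval_cases r
  · rw [if_pos (by omega), if_pos (by omega)]; norm_num
  · rw [if_neg (by omega), if_neg (by omega)]; simp
  · rw [if_neg (by omega), if_pos (by omega)]
    rw [show ((2 : ℕ) : ℝ) * (π / 2) = π by push_cast; ring]; simp
  · rw [if_neg (by omega), if_neg (by omega)]
    rw [show ((3 : ℕ) : ℝ) * (π / 2) = π / 2 + π by push_cast; ring, Real.cos_add_pi]; simp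

/-- The coefficient `cos (π n / 2)` is `2 [4 ∣ n] - [2 ∣ n]`, so the cosine zeta function at `1 / 4` is
a combination of two rescaled copies of `ζ`. -/
lemma cosZeta_quarter {s : ℂ} (hs : 1 < s.re) :
    cosZeta ((1 / 4 : ℝ) : UnitAddCircle) s =
      (2 * ((2 : ℂ) ^ (-s)) ^ 2 - (2 : ℂ) ^ (-s)) * riemannZeta s := by
  have h4 : ((4 : ℕ) : ℂ) ^ (-s) = ((2 : ℂ) ^ (-s)) ^ 2 := by
    rw [show (4 : ℕ) = 2 * 2 from rfl, Nat.cast_mul, natCast_mul_natCast_cpow, sq]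
    norm_num
  have h := ((hasSum_dvd_one_div_cpow (m := 4) (by norm_num) hs).mul_left 2).sub
    (hasSum_dvd_one_div_cpow (m := 2) (by norm_num) hs)
  rw [h4] at h
  rw [sub_mul, mul_assoc]
  refine (hasSum_nat_cosZeta (1 / 4) hs).unique (h.congr_fun fun n => ?_)
  rw [cos_quarter_mul_nat]
  split_ifs <;> push_cast <;> ring

/-- Catalan's constant as a sine zeta value: `sin (π n / 2)` vanishes for even `n` and equals
`(-1) ^ k` for `n = 2 k + 1`. -/
lemma sinZeta_quarter_two :
    sinZeta ((1 / 4 : ℝ) : UnitAddCircle) 2 =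
      ((∑' n : ℕ, (-1 : ℝ) ^ n / (2 * (n : ℝ) + 1) ^ 2 : ℝ) : ℂ) := by
  have h := hasSum_nat_sinZeta (1 / 4) (s := 2) (by norm_num)
  have hinj : Function.Injective (fun k : ℕ => 2 * k + 1) := fun a b h => by
    simpa using h
  rw [← hinj.hasSum_iff] at h
  · rw [ofReal_tsum, ← h.tsum_eq]
    refine tsum_congr fun k => ?_
    have hs : Real.sin (2 * π * (1 / 4) * ((2 * k + 1 : ℕ) : ℝ)) = (-1) ^ k := by
      rw [show 2 * π * (1 / 4) * ((2 * k + 1 : ℕ) : ℝ) = π / 2 + k * π by push_cast; ring,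
        Real.sin_add_nat_mul_pi]
      simp
    simp only [Function.comp_apply, hs]
    norm_cast
  · intro n hn
    have heven : Even n := by
      by_contra hodd
      obtain ⟨k, rfl⟩ := Nat.not_even_iff_odd.mp hodd
      exact hn ⟨k, rfl⟩
    obtain ⟨k, rfl⟩ := heven
    rw [show 2 * π * (1 / 4) * ((k + k : ℕ) : ℝ) = k * π by push_cast; ring,
      Real.sin_nat_mul_pi]
    simp

lemma hasDerivAt_hurwitzZetaEven_quarter :
    HasDerivAt (hurwitzZetaEven ((1 / 4 : ℝ) : UnitAddCircle))
      (-(1 / 8) * deriv riemannZeta (-1)) (-1) := by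
  have heq : hurwitzZetaEven ((1 / 4 : ℝ) : UnitAddCircle) =ᶠ[nhds (-1)]
      fun s => (2 * ((2 : ℂ) ^ (s - 1)) ^ 2 - (2 : ℂ) ^ (s - 1)) * riemannZeta s := by
    have hopen : IsOpen {s : ℂ | s.re < 0} := isOpen_lt continuous_re continuous_const
    filter_upwards [hopen.mem_nhds (show (-1 : ℂ) ∈ {s : ℂ | s.re < 0} by simp)] with s hs
    have hs' : 1 < (1 - s).re := by
      have : s.re < 0 := hs
      rw [sub_re, one_re]
      linarith
    have hn (n : ℕ) : 1 - s ≠ -n := fun h => by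
      rw [h] at hs'
      simp at hs'
      linarith [(Nat.cast_nonneg n : (0 : ℝ) ≤ n)]
    have h1 : 1 - s ≠ 1 := fun h => by simp [h] at hs'
    have e1 := hurwitzZetaEven_one_sub ((1 / 4 : ℝ) : UnitAddCircle) hn (Or.inr h1)
    have e2 := riemannZeta_one_sub hn h1
    rw [cosZeta_quarter hs'] at e1
    rw [sub_sub_cancel] at e1 e2
    rw [e1, e2, neg_sub]
    ring
  refine HasDerivAt.congr_of_eventuallyEq ?_ heq
  have hu : HasDerivAt (fun s : ℂ => (2 : ℂ) ^ (s - 1)) ((2 : ℂ) ^ ((-1 : ℂ) - 1) * Complex.log 2)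
      (-1) := by
    simpa using ((hasDerivAt_id (-1 : ℂ)).sub_const 1).const_cpow (c := 2) (Or.inl two_ne_zero)
  have hz : HasDerivAt riemannZeta (deriv riemannZeta (-1)) (-1) :=
    (differentiableAt_riemannZeta (by norm_num)).hasDerivAt
  have hval : (2 : ℂ) ^ ((-1 : ℂ) - 1) = 1 / 4 := by
    rw [show (-1 : ℂ) - 1 = ((-2 : ℤ) : ℂ) by norm_num, cpow_intCast]
    norm_num
  refine ((((hu.pow 2).const_mul 2).sub hu).mul hz).congr_deriv ?_
  simp only [Pi.sub_apply, Pi.pow_apply, hval]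
  -- `4 u - 1` vanishes at `u = 1 / 4`, which removes the terms in `log 2` and `ζ(-1)`.
  push_cast
  ring

lemma hasDerivAt_hurwitzZetaOdd_quarter :
    HasDerivAt (hurwitzZetaOdd ((1 / 4 : ℝ) : UnitAddCircle))
      (sinZeta ((1 / 4 : ℝ) : UnitAddCircle) 2 / (4 * π)) (-1) := by
  set g : ℂ → ℂ := fun s => 2 * (2 * π) ^ (s - 1) * Complex.Gamma (1 - s) *
    sinZeta ((1 / 4 : ℝ) : UnitAddCircle) (1 - s) with hg
  have heq : hurwitzZetaOdd ((1 / 4 : ℝ) : UnitAddCircle) =ᶠ[nhds (-1)]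
      fun s => g s * Complex.sin (π * (1 - s) / 2) := by
    have hopen : IsOpen {s : ℂ | s.re < 0} := isOpen_lt continuous_re continuous_const
    filter_upwards [hopen.mem_nhds (show (-1 : ℂ) ∈ {s : ℂ | s.re < 0} by simp)] with s hs
    have hn (n : ℕ) : 1 - s ≠ -n := fun h => by
      have h' := congrArg re h
      have : s.re < 0 := hs
      simp at h'
      linarith [(Nat.cast_nonneg n : (0 : ℝ) ≤ n)]
    have e1 := hurwitzZetaOdd_one_sub ((1 / 4 : ℝ) : UnitAddCircle) hn
    rw [sub_sub_cancel] at e1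
    rw [e1, hg, neg_sub]
    ring
  refine HasDerivAt.congr_of_eventuallyEq ?_ heq
  have hpi : (π : ℂ) ≠ 0 := ofReal_ne_zero.mpr Real.pi_ne_zero
  have hsub : DifferentiableAt ℂ (fun s : ℂ => 1 - s) (-1) := by fun_prop
  have hgd : DifferentiableAt ℂ g (-1) := by
    refine ((DifferentiableAt.mul ?_ ?_).mul ?_).mul ?_
    · fun_prop
    · exact DifferentiableAt.const_cpow (by fun_prop) (Or.inl (by simp [hpi]))
    · refine DifferentiableAt.comp (-1 : ℂ) (g := Complex.Gamma)
        (Complex.differentiableAt_Gamma _ fun n h => ?_) hsub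
      have h' := congrArg re h
      simp at h'
      linarith [(Nat.cast_nonneg n : (0 : ℝ) ≤ n)]
    · exact DifferentiableAt.comp (-1 : ℂ) (differentiableAt_sinZeta _ _) hsub
  have hlin : HasDerivAt (fun s : ℂ => π * (1 - s) / 2) (-(π / 2)) (-1) := by
    refine ((((hasDerivAt_id (-1 : ℂ)).const_sub 1).const_mul (π : ℂ)).div_const 2).congr_deriv ?_
    ring
  have hpt : (π : ℂ) * (1 - -1) / 2 = π := by ring
  have hgval : g (-1) = 2 / (2 * π) ^ 2 * sinZeta ((1 / 4 : ℝ) : UnitAddCircle) 2 := by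
    have hG : Complex.Gamma 2 = 1 := by
      simp
    rw [hg]
    simp only
    rw [show (-1 : ℂ) - 1 = ((-2 : ℤ) : ℂ) by norm_num, cpow_intCast,
      show (1 : ℂ) - -1 = 2 by norm_num, hG, zpow_neg]
    norm_cast
    ring_nf
  refine (hgd.hasDerivAt.mul ((Complex.hasDerivAt_sin _).comp (-1 : ℂ) hlin)).congr_deriv ?_
  simp only [Function.comp_apply]
  -- Since `sin π = 0`, the derivative of `g` does not contribute.
  rw [hpt, Complex.sin_pi, Complex.cos_pi, hgval]
  field_simp
  ring

/-- Adamchik's evaluation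
`ζ'(−1, 1/4) = G/(4π) − (1/8) ζ'(−1)`, where `ζ(s,a)` is the Hurwitz zeta function,
`ζ` the Riemann zeta function and `G` Catalan's constant. -/
theorem stmt_19 :
    deriv (fun s : ℂ => hurwitzZeta (((1 / 4 : ℝ) : UnitAddCircle)) s) (-1) =
      (((∑' n : ℕ, (-1 : ℝ) ^ n / (2 * (n : ℝ) + 1) ^ 2) / (4 * Real.pi) : ℝ) : ℂ) -
        (1 / 8) * deriv riemannZeta (-1) := by
  have h := (hasDerivAt_hurwitzZetaEven_quarter.add hasDerivAt_hurwitzZetaOdd_quarter).deriv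
  rw [sinZeta_quarter_two] at h
  refine Eq.trans h ?_
  rw [ofReal_div, ofReal_mul, ofReal_ofNat]
  ring
end
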